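/- Let A ∈ O(Ω,H) be a POVM and J ∈ Ins(Λ,H,K) an instrument. Then A and J are compatible if and only if J is a postprocessing of the Lüders instrument I^A of A (J ⪯ I^A). -/

import Mathlib

open scoped Kronecker ComplexOrder
open Matrix

noncomputable section

/-- The positive semidefinite square root of a positive semidefinite matrix
(the definition of the older Mathlib, since removed there). -/
def Matrix.PosSemidef.sqrt {n 𝕜 : Type*} [Fintype n] [RCLike 𝕜] [DecidableEq n]
    {A : Matrix n n 𝕜} (hA : A.PosSemidef) : Matrix n n 𝕜 :=
  hA.1.eigenvectorUnitary.1 * diagonal ((↑) ∘ Real.sqrt ∘ hA.1.eigenvalues) *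
    (star hA.1.eigenvectorUnitary : Matrix n n 𝕜)

/-- Linear maps between matrix algebras, representing super-operators
`L(H) → L(K)` for finite-dimensional Hilbert spaces with index types `dH`, `dK`. -/
abbrev MatMap (dH dK : Type) : Type := Matrix dH dH ℂ →ₗ[ℂ] Matrix dK dK ℂ

variable {Ω Λ dH dK dV dA dA' : Type}

/-- The Choi matrix of a super-operator. -/
def choiMatrix [DecidableEq dH] (Φ : MatMap dH dK) : Matrix (dH × dK) (dH × dK) ℂ :=
  fun p q => Φ (Matrix.single p.1 q.1 1) p.2 q.2

/-- Complete positivity of a super-operator (positivity of its Choi matrix). -/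
def IsCP [Fintype dH] [DecidableEq dH] [Fintype dK] (Φ : MatMap dH dK) : Prop :=
  (choiMatrix Φ).PosSemidef

/-- A quantum state: a positive semidefinite matrix of unit trace. -/
def IsState [Fintype dH] (ρ : Matrix dH dH ℂ) : Prop := ρ.PosSemidef ∧ ρ.trace = 1

/-- Trace-nonincreasing super-operator. -/
def IsTNI [Fintype dH] [Fintype dK] (Φ : MatMap dH dK) : Prop :=
  ∀ ρ : Matrix dH dH ℂ, ρ.PosSemidef → (Φ ρ).trace ≤ ρ.trace

/-- Trace-preserving super-operator. -/
def IsTP [Fintype dH] [Fintype dK] (Φ : MatMap dH dK) : Prop :=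
  ∀ ρ : Matrix dH dH ℂ, (Φ ρ).trace = ρ.trace

/-- A quantum instrument with outcome set `Ω` from system `dH` to system `dK`:
a family of completely positive trace-nonincreasing maps summing to a channel. -/
structure Instrument (Ω dH dK : Type) [Fintype Ω] [Fintype dH] [DecidableEq dH]
    [Fintype dK] : Type where
  op : Ω → MatMap dH dK
  cp : ∀ x, IsCP (op x)
  tni : ∀ x, IsTNI (op x)
  tp : IsTP (∑ x, op x)

/-- A quantum channel: a completely positive trace-preserving super-operator. -/
structure Channel (dH dK : Type) [Fintype dH] [DecidableEq dH] [Fintype dK] : Type where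
  map : MatMap dH dK
  cp : IsCP map
  tp : IsTP map

/-- A POVM with outcome set `Ω` on system `d`. -/
structure POVM (Ω d : Type) [Fintype Ω] [Fintype d] [DecidableEq d] : Type where
  elem : Ω → Matrix d d ℂ
  pos : ∀ x, (elem x).PosSemidef
  sum_eq : ∑ x, elem x = 1

/-- The effect (induced POVM element) of an operation `Φ`:
the unique matrix `A` with `tr[A ρ] = tr[Φ ρ]` for all `ρ`. -/
def dualId [Fintype dH] [DecidableEq dH] [Fintype dK] (Φ : MatMap dH dK) :
    Matrix dH dH ℂ :=
  fun i j => (Φ (Matrix.single j i 1)).trace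

/-- Partial trace over the first tensor factor. -/
def ptraceL [Fintype dA] (M : Matrix (dA × dK) (dA × dK) ℂ) : Matrix dK dK ℂ :=
  fun i j => ∑ a, M (a, i) (a, j)

/-- Partial trace over the second tensor factor. -/
def ptraceR [Fintype dV] (M : Matrix (dK × dV) (dK × dV) ℂ) : Matrix dK dK ℂ :=
  fun i j => ∑ b, M (i, b) (j, b)

/-- Compatibility of two instruments: existence of a joint instrument whose
partial-trace marginals (summed over the other outcome) reproduce both instruments
on all states. -/
def InsCompatible [Fintype Ω] [Fintype Λ] [Fintype dH] [DecidableEq dH] [Fintype dK]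
    [Fintype dV] (I : Instrument Ω dH dK) (J : Instrument Λ dH dV) : Prop :=
  ∃ G : Instrument (Ω × Λ) dH (dK × dV),
    (∀ y, ∀ ρ : Matrix dH dH ℂ, IsState ρ → ∑ x, ptraceL (G.op (x, y) ρ) = J.op y ρ) ∧
    (∀ x, ∀ ρ : Matrix dH dH ℂ, IsState ρ → ∑ y, ptraceR (G.op (x, y) ρ) = I.op x ρ)

/-- Compatibility of an instrument and a channel (a one-outcome instrument). -/
def InsChCompatible [Fintype Ω] [Fintype dH] [DecidableEq dH] [Fintype dK] [Fintype dV]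
    (I : Instrument Ω dH dK) (Ψ : Channel dH dV) : Prop :=
  ∃ G : Instrument Ω dH (dK × dV),
    (∀ ρ : Matrix dH dH ℂ, IsState ρ → ∑ x, ptraceL (G.op x ρ) = Ψ.map ρ) ∧
    (∀ x, ∀ ρ : Matrix dH dH ℂ, IsState ρ → ptraceR (G.op x ρ) = I.op x ρ)

/-- Compatibility of two channels. -/
def ChCompatible [Fintype dH] [DecidableEq dH] [Fintype dK] [Fintype dV]
    (Φ : Channel dH dK) (Ψ : Channel dH dV) : Prop :=
  ∃ Γ : Channel dH (dK × dV),
    (∀ ρ : Matrix dH dH ℂ, IsState ρ → ptraceL (Γ.map ρ) = Ψ.map ρ) ∧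
    (∀ ρ : Matrix dH dH ℂ, IsState ρ → ptraceR (Γ.map ρ) = Φ.map ρ)

/-- Compatibility of a POVM and an instrument: existence of a joint instrument `G`
with `∑ x, G.op (x, y) = J.op y` and whose induced POVM has the POVM `A` as a margin. -/
def POVMInsCompatible [Fintype Ω] [Fintype Λ] [Fintype dH] [DecidableEq dH] [Fintype dK]
    (A : POVM Ω dH) (J : Instrument Λ dH dK) : Prop :=
  ∃ G : Instrument (Ω × Λ) dH dK,
    (∀ y, ∑ x, G.op (x, y) = J.op y) ∧
    (∀ x, ∑ y, dualId (G.op (x, y)) = A.elem x)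

/-- Compatibility (joint measurability) of two POVMs. -/
def POVMCompatible [Fintype Ω] [Fintype Λ] [Fintype dH] [DecidableEq dH]
    (A : POVM Ω dH) (B : POVM Λ dH) : Prop :=
  ∃ G : POVM (Ω × Λ) dH,
    (∀ y, ∑ x, G.elem (x, y) = B.elem y) ∧
    (∀ x, ∑ y, G.elem (x, y) = A.elem x)

/-- Compatibility of a POVM and a channel: existence of an instrument implementing both. -/
def POVMChCompatible [Fintype Ω] [Fintype dH] [DecidableEq dH] [Fintype dK]
    (A : POVM Ω dH) (Ψ : Channel dH dK) : Prop :=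
  ∃ G : Instrument Ω dH dK,
    (∑ x, G.op x) = Ψ.map ∧ ∀ x, dualId (G.op x) = A.elem x

/-- Instrument postprocessing: `I ⪯ J` if `I_x = ∑ y, R^(y)_x ∘ J_y` for
a family of instruments `R^(y)`. -/
def Postprocessed [Fintype Ω] [Fintype Λ] [Fintype dH] [DecidableEq dH] [Fintype dK]
    [Fintype dV] [DecidableEq dV] (I : Instrument Ω dH dK) (J : Instrument Λ dH dV) : Prop :=
  ∃ R : Λ → Instrument Ω dV dK, ∀ x, I.op x = ∑ y, (R y).op x ∘ₗ J.op y

/-- An instrument `I` does not disturb an instrument `J`: `J_y ∘ Φ^I = J_y`. -/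
def NonDisturbs [Fintype Ω] [Fintype Λ] [Fintype dH] [DecidableEq dH] [Fintype dV]
    (I : Instrument Ω dH dH) (J : Instrument Λ dH dV) : Prop :=
  ∀ y, J.op y ∘ₗ (∑ x, I.op x) = J.op y

/-- An instrument `I` does not disturb a channel `Ψ`: `Ψ ∘ Φ^I = Ψ`. -/
def InsNonDisturbsCh [Fintype Ω] [Fintype dH] [DecidableEq dH] [Fintype dV]
    (I : Instrument Ω dH dH) (Ψ : Channel dH dV) : Prop :=
  Ψ.map ∘ₗ (∑ x, I.op x) = Ψ.map

/-- An instrument `I` does not disturb a POVM `A`: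
the statistics of `A` are unchanged by the channel induced by `I`. -/
def InsNonDisturbsPOVM [Fintype Ω] [Fintype Λ] [Fintype dH] [DecidableEq dH]
    (I : Instrument Ω dH dH) (A : POVM Λ dH) : Prop :=
  ∀ y, ∀ ρ : Matrix dH dH ℂ,
    (A.elem y * ((∑ x, I.op x) ρ)).trace = (A.elem y * ρ).trace

/-- A POVM `A` does not disturb an instrument `J`: some instrument measuring `A`
does not disturb `J`. -/
def POVMNonDisturbs [Fintype Ω] [Fintype Λ] [Fintype dH] [DecidableEq dH] [Fintype dV]
    (A : POVM Ω dH) (J : Instrument Λ dH dV) : Prop :=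
  ∃ I : Instrument Ω dH dH, (∀ x, dualId (I.op x) = A.elem x) ∧ NonDisturbs I J

/-- A POVM `A` does not disturb a channel `Ψ`. -/
def POVMNonDisturbsCh [Fintype Ω] [Fintype dH] [DecidableEq dH] [Fintype dV]
    (A : POVM Ω dH) (Ψ : Channel dH dV) : Prop :=
  ∃ I : Instrument Ω dH dH, (∀ x, dualId (I.op x) = A.elem x) ∧ InsNonDisturbsCh I Ψ

/-- A POVM `A` does not disturb a POVM `B`. -/
def POVMNonDisturbsPOVM [Fintype Ω] [Fintype Λ] [Fintype dH] [DecidableEq dH]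
    (A : POVM Ω dH) (B : POVM Λ dH) : Prop :=
  ∃ I : Instrument Ω dH dH, (∀ x, dualId (I.op x) = A.elem x) ∧ InsNonDisturbsPOVM I B

/-- A sharp (projection-valued) POVM. -/
def IsSharp [Fintype Ω] [Fintype dH] [DecidableEq dH] (A : POVM Ω dH) : Prop :=
  ∀ x, A.elem x * A.elem x = A.elem x

/-- `(H_A, W, E)` is a dilation of the instrument `I`:
`W` is an isometry `H → H_A ⊗ K` and
`I_x(ρ) = Tr_{H_A}[W ρ W* (E(x) ⊗ 1_K)]` on all states. -/
def IsDilation [Fintype Ω] [Fintype dH] [DecidableEq dH] [Fintype dK] [DecidableEq dK]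
    [Fintype dA] [DecidableEq dA] (I : Instrument Ω dH dK)
    (W : Matrix (dA × dK) dH ℂ) (E : POVM Ω dA) : Prop :=
  Wᴴ * W = 1 ∧
  ∀ x, ∀ ρ : Matrix dH dH ℂ, IsState ρ →
    I.op x ρ = ptraceL (W * ρ * Wᴴ * (E.elem x ⊗ₖ (1 : Matrix dK dK ℂ)))

/-- Minimality of a Stinespring isometry `W : H → H_A ⊗ K`:
the span of `{(1 ⊗ B) W φ}` is everything. -/
def IsMinimalW [Fintype dH] [Fintype dK] [DecidableEq dK] [Fintype dA] [DecidableEq dA]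
    (W : Matrix (dA × dK) dH ℂ) : Prop :=
  Submodule.span ℂ {v : (dA × dK) → ℂ |
    ∃ (B : Matrix dK dK ℂ) (φ : dH → ℂ),
      v = ((1 : Matrix dA dA ℂ) ⊗ₖ B) *ᵥ (W *ᵥ φ)} = ⊤

/-- `IC` is the complementary instrument of the instrument dilated by `(W, E)`:
`IC_x(ρ) = Tr_K[(√E(x) ⊗ 1) W ρ W* (√E(x) ⊗ 1)]`. -/
def IsComplementaryOf [Fintype Ω] [Fintype dH] [DecidableEq dH] [Fintype dK]
    [DecidableEq dK] [Fintype dA] [DecidableEq dA] (W : Matrix (dA × dK) dH ℂ) (E : POVM Ω dA)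
    (IC : Instrument Ω dH dA) : Prop :=
  ∀ x, ∀ ρ : Matrix dH dH ℂ,
    IC.op x ρ =
      ptraceR (((E.pos x).sqrt ⊗ₖ (1 : Matrix dK dK ℂ)) * (W * ρ * Wᴴ) *
        ((E.pos x).sqrt ⊗ₖ (1 : Matrix dK dK ℂ)))

/-- A measure-and-prepare instrument: `I_x(ρ) = tr[A(x) ρ] ξ_x`. -/
def IsMeasureAndPrepare [Fintype Ω] [Fintype dH] [DecidableEq dH] [Fintype dK]
    [DecidableEq dK] (I : Instrument Ω dH dK) : Prop :=
  ∃ (A : POVM Ω dH) (ξ : Ω → Matrix dK dK ℂ),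
    (∀ x, IsState (ξ x)) ∧
    ∀ x, ∀ ρ : Matrix dH dH ℂ, I.op x ρ = ((A.elem x * ρ).trace) • ξ x

/-- A pure state: a state which is a (rank-one) projection. -/
def IsPureState [Fintype dK] (ρ : Matrix dK dK ℂ) : Prop :=
  IsState ρ ∧ ρ * ρ = ρ

/-- A rank-1 POVM: every effect has rank at most one. -/
def IsRankOnePOVM [Fintype Ω] [Fintype dH] [DecidableEq dH] (A : POVM Ω dH) : Prop :=
  ∀ x, (A.elem x).rank ≤ 1

/-- POVM postprocessing: `B(y) = ∑ x, ν x y • A(x)` for a stochastic matrix `ν`. -/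
def POVMPostprocessed [Fintype Ω] [Fintype Λ] [Fintype dH] [DecidableEq dH]
    (B : POVM Λ dH) (A : POVM Ω dH) : Prop :=
  ∃ ν : Ω → Λ → ℝ, (∀ x y, 0 ≤ ν x y) ∧ (∀ x, ∑ y, ν x y = 1) ∧
    ∀ y, B.elem y = ∑ x, (ν x y : ℂ) • A.elem x

/-- A measure-and-prepare instrument preparing pure states. -/
def IsMeasureAndPreparePure [Fintype Ω] [Fintype dH] [DecidableEq dH] [Fintype dK]
    [DecidableEq dK] (I : Instrument Ω dH dK) : Prop :=
  ∃ (A : POVM Ω dH) (ξ : Ω → Matrix dK dK ℂ),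
    (∀ x, IsPureState (ξ x)) ∧
    ∀ x, ∀ ρ : Matrix dH dH ℂ, I.op x ρ = ((A.elem x * ρ).trace) • ξ x

/-!
Write `Ad_S` for `ρ ↦ S ρ Sᴴ`. Everything rests on a factorization property of completely positive
maps `Φ_y` whose total trace is that of `Ad_S`. The Kraus operators of `Φ_y` vanish on the kernel
of `S`, so if `T` is a generalized inverse of `S`, then `Φ_y ∘ Ad_(T S) = Φ_y`, that is,
`Φ_y ∘ Ad_T` is a left factor of `Φ_y` through `Ad_S`. Since `Σ_y Φ_y ∘ Ad_T` preserves the trace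
only on the range of `S`, it is completed to an instrument by applying an arbitrary instrument on
the complement of that range.

If `G` is a joint instrument for `A` and `J`, then for each `x` the family `y ↦ G_(x,y)` has the
same total trace as `I^A_x`, hence factors through it, and the factors are the postprocessing.
Conversely, the maps `R^(x)_y ∘ I^A_x` form a joint instrument.
-/

section MatrixLemmas

variable {m n 𝕜 : Type*} [RCLike 𝕜] [Fintype n]

lemma exists_isHermitian_mul_mul_eq_self {A : Matrix n n 𝕜} (hA : A.IsHermitian) :
    ∃ B : Matrix n n 𝕜, B.IsHermitian ∧ A * B * A = A := by
  classical
  have hcont (f : ℝ → ℝ) : ContinuousOn f (spectrum ℝ A) := A.finite_real_spectrum.continuousOn f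
  have hA' : IsSelfAdjoint A := hA
  -- As `0⁻¹ = 0`, the functional calculus of `(·)⁻¹` inverts `A` on its range only.
  refine ⟨cfc (fun t : ℝ ↦ t⁻¹) A, cfc_predicate _ A, ?_⟩
  calc A * cfc (fun t : ℝ ↦ t⁻¹) A * A
      = cfc id A * cfc (fun t : ℝ ↦ t⁻¹) A * cfc id A := by rw [cfc_id ℝ A]
    _ = cfc (fun t : ℝ ↦ id t * t⁻¹ * id t) A := by
        rw [← cfc_mul _ _ A (hcont _) (hcont _), ← cfc_mul _ _ A (hcont _) (hcont _)]
    _ = A := by simp only [id, mul_inv_mul_cancel, cfc_id' ℝ A]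

lemma exists_mul_mul_eq_self_isHermitian_mul [Fintype m] (S : Matrix m n 𝕜) :
    ∃ T : Matrix n m 𝕜, S * T * S = S ∧ (S * T).IsHermitian := by
  classical
  obtain ⟨B, hB, hSBS⟩ := exists_isHermitian_mul_mul_eq_self (isHermitian_conjTranspose_mul_self S)
  refine ⟨B * Sᴴ, ?_, ?_⟩
  · have hker : Sᴴ * S * (B * (Sᴴ * S) - 1) = 0 := by
      rw [mul_sub, mul_one, ← mul_assoc, hSBS, sub_self]
    rw [conjTranspose_mul_self_mul_eq_zero, Matrix.mul_sub, Matrix.mul_one, sub_eq_zero] at hker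
    simpa only [Matrix.mul_assoc] using hker
  · rw [← Matrix.mul_assoc]
    exact isHermitian_mul_mul_conjTranspose S hB

variable [DecidableEq n]

lemma posSemidef_sqrt_eq_cfc_sqrt {A : Matrix n n 𝕜} (hA : A.PosSemidef) :
    hA.sqrt = cfc Real.sqrt A :=
  (hA.1.cfc_eq Real.sqrt).symm

lemma isHermitian_posSemidef_sqrt {A : Matrix n n 𝕜} (hA : A.PosSemidef) :
    hA.sqrt.IsHermitian := by
  rw [posSemidef_sqrt_eq_cfc_sqrt]
  exact cfc_predicate Real.sqrt A

open scoped MatrixOrder in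
lemma posSemidef_sqrt_mul_self {A : Matrix n n 𝕜} (hA : A.PosSemidef) :
    hA.sqrt * hA.sqrt = A := by
  rw [posSemidef_sqrt_eq_cfc_sqrt, ← cfcₙ_eq_cfc, ← CFC.sqrt_eq_real_sqrt A hA.nonneg,
    CFC.sqrt_mul_sqrt_self A hA.nonneg]

end MatrixLemmas

section ConjMap

variable {dM : Type} [Fintype dH]

/-- The super-operator `ρ ↦ K ρ Kᴴ` with the single Kraus operator `K`. -/
def conjMap (K : Matrix dK dH ℂ) : MatMap dH dK where
  toFun ρ := K * ρ * Kᴴ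
  map_add' ρ σ := by rw [Matrix.mul_add, Matrix.add_mul]
  map_smul' c ρ := by rw [Matrix.mul_smul, Matrix.smul_mul, RingHom.id_apply]

lemma conjMap_apply (K : Matrix dK dH ℂ) (ρ : Matrix dH dH ℂ) : conjMap K ρ = K * ρ * Kᴴ := rfl

lemma conjMap_zero : conjMap (0 : Matrix dK dH ℂ) = 0 := by
  ext1 ρ
  simp only [conjMap_apply, Matrix.zero_mul, LinearMap.zero_apply]

lemma conjMap_comp_conjMap [Fintype dK] (K : Matrix dM dK ℂ) (L : Matrix dK dH ℂ) :
    conjMap K ∘ₗ conjMap L = conjMap (K * L) := by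
  ext1 ρ
  simp only [LinearMap.comp_apply, conjMap_apply, conjTranspose_mul, Matrix.mul_assoc]

lemma trace_conjMap [Fintype dK] (K : Matrix dK dH ℂ) (ρ : Matrix dH dH ℂ) :
    (conjMap K ρ).trace = (Kᴴ * K * ρ).trace := by
  rw [conjMap_apply, Matrix.trace_mul_comm, Matrix.mul_assoc]

lemma trace_conjMap_add_trace_conjMap_one_sub [DecidableEq dH] {P : Matrix dH dH ℂ}
    (hP : IsStarProjection P) (ρ : Matrix dH dH ℂ) :
    (conjMap P ρ).trace + (conjMap (1 - P) ρ).trace = ρ.trace := by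
  have hgram {Q : Matrix dH dH ℂ} (hQ : IsStarProjection Q) : Qᴴ * Q = Q := by
    rw [← star_eq_conjTranspose, hQ.isSelfAdjoint.star_eq, hQ.isIdempotentElem.eq]
  rw [trace_conjMap, trace_conjMap, hgram hP, hgram hP.one_sub, ← Matrix.trace_add, ← add_mul,
    add_sub_cancel, one_mul]

end ConjMap

section Choi

variable [DecidableEq dH]

lemma choiMatrix_sum {ι : Type*} (s : Finset ι) (Φ : ι → MatMap dH dK) :
    choiMatrix (∑ i ∈ s, Φ i) = ∑ i ∈ s, choiMatrix (Φ i) := by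
  ext p q
  simp only [choiMatrix, LinearMap.sum_apply, Matrix.sum_apply]

lemma choiMatrix_injective [Finite dH] :
    Function.Injective (choiMatrix : MatMap dH dK → Matrix (dH × dK) (dH × dK) ℂ) := by
  refine fun Φ Ψ h ↦ Matrix.ext_linearMap (R := ℂ) fun i j ↦ LinearMap.ext_ring ?_
  ext k l
  exact congrFun₂ h (i, k) (j, l)

lemma choiMatrix_conjMap [Fintype dH] (K : Matrix dK dH ℂ) :
    choiMatrix (conjMap K) =
      vecMulVec (fun p : dH × dK ↦ K p.2 p.1) (star fun p : dH × dK ↦ K p.2 p.1) := by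
  ext ⟨i, k⟩ ⟨j, l⟩
  simp [choiMatrix, conjMap_apply, vecMulVec_apply, Matrix.mul_apply, Matrix.single_apply, ite_and]

end Choi

section CompletelyPositive

variable {dM : Type} [Fintype dH] [DecidableEq dH] [Fintype dK]

lemma isCP_conjMap (K : Matrix dK dH ℂ) : IsCP (conjMap K) := by
  rw [IsCP, choiMatrix_conjMap]
  exact posSemidef_vecMulVec_self_star _

lemma IsCP.add {Φ Ψ : MatMap dH dK} (hΦ : IsCP Φ) (hΨ : IsCP Ψ) : IsCP (Φ + Ψ) :=
  Matrix.PosSemidef.add hΦ hΨ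

lemma isCP_sum {ι : Type*} (s : Finset ι) {Φ : ι → MatMap dH dK} (hΦ : ∀ i ∈ s, IsCP (Φ i)) :
    IsCP (∑ i ∈ s, Φ i) := by
  rw [IsCP, choiMatrix_sum]
  exact posSemidef_sum s hΦ

lemma isCP_iff_exists_eq_sum_conjMap {Φ : MatMap dH dK} :
    IsCP Φ ↔ ∃ (m : ℕ) (K : Fin m → Matrix dK dH ℂ), Φ = ∑ i, conjMap (K i) := by
  refine ⟨fun hΦ ↦ ?_, ?_⟩
  · obtain ⟨m, v, hv⟩ := posSemidef_iff_eq_sum_vecMulVec.mp hΦ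
    refine ⟨m, fun i ↦ .of fun k j ↦ v i (j, k), choiMatrix_injective ?_⟩
    simp only [hv, choiMatrix_sum, choiMatrix_conjMap, Matrix.of_apply, Prod.mk.eta]
  · rintro ⟨m, K, rfl⟩
    exact isCP_sum _ fun i _ ↦ isCP_conjMap (K i)

lemma IsCP.comp [Fintype dM] [DecidableEq dM] {Φ : MatMap dM dK} {Ψ : MatMap dH dM}
    (hΦ : IsCP Φ) (hΨ : IsCP Ψ) : IsCP (Φ ∘ₗ Ψ) := by
  obtain ⟨m, K, rfl⟩ := isCP_iff_exists_eq_sum_conjMap.mp hΦ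
  obtain ⟨n, L, rfl⟩ := isCP_iff_exists_eq_sum_conjMap.mp hΨ
  have hcomp : (∑ i, conjMap (K i)) ∘ₗ (∑ j, conjMap (L j)) = ∑ j, ∑ i, conjMap (K i * L j) := by
    ext1 ρ
    simp only [LinearMap.comp_apply, LinearMap.sum_apply, map_sum, ← conjMap_comp_conjMap]
  rw [hcomp]
  exact isCP_sum _ fun j _ ↦ isCP_sum _ fun i _ ↦ isCP_conjMap _

lemma IsCP.map_posSemidef {Φ : MatMap dH dK} (hΦ : IsCP Φ) {ρ : Matrix dH dH ℂ}
    (hρ : ρ.PosSemidef) : (Φ ρ).PosSemidef := by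
  obtain ⟨m, K, rfl⟩ := isCP_iff_exists_eq_sum_conjMap.mp hΦ
  rw [LinearMap.sum_apply]
  exact posSemidef_sum _ fun i _ ↦ hρ.mul_mul_conjTranspose_same (K i)

lemma IsCP.comp_conjMap_one_sub_of_trace_eq_zero {Φ : MatMap dH dK} (hΦ : IsCP Φ)
    {Q : Matrix dH dH ℂ} (hQ : (Φ (Q * Qᴴ)).trace = 0) : Φ ∘ₗ conjMap (1 - Q) = Φ := by
  obtain ⟨m, K, rfl⟩ := isCP_iff_exists_eq_sum_conjMap.mp hΦ
  have htrace : ∑ i, ((K i * Q) * (K i * Q)ᴴ).trace = 0 := by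
    simpa only [LinearMap.sum_apply, Matrix.trace_sum, conjMap_apply, conjTranspose_mul,
      Matrix.mul_assoc] using hQ
  have hKQ (i : Fin m) : K i * Q = 0 :=
    trace_mul_conjTranspose_self_eq_zero_iff.mp <|
      (Finset.sum_eq_zero_iff_of_nonneg fun i _ ↦
        (posSemidef_self_mul_conjTranspose (K i * Q)).trace_nonneg).mp htrace i (Finset.mem_univ i)
  have habsorb (i : Fin m) : conjMap (K i) ∘ₗ conjMap (1 - Q) = conjMap (K i) := by
    rw [conjMap_comp_conjMap, Matrix.mul_sub, Matrix.mul_one, hKQ, sub_zero]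
  ext1 ρ
  simp only [LinearMap.comp_apply, LinearMap.sum_apply]
  exact Finset.sum_congr rfl fun i _ ↦ LinearMap.congr_fun (habsorb i) ρ

end CompletelyPositive

section Effect

variable [Fintype dH] [DecidableEq dH] [Fintype dK]

lemma trace_dualId_mul (Φ : MatMap dH dK) (ρ : Matrix dH dH ℂ) :
    (dualId Φ * ρ).trace = (Φ ρ).trace := by
  suffices h : traceLinearMap dH ℂ ℂ ∘ₗ LinearMap.mulLeft ℂ (dualId Φ) =
      traceLinearMap dK ℂ ℂ ∘ₗ Φ from LinearMap.congr_fun h ρ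
  refine Matrix.ext_linearMap (R := ℂ) fun i j ↦ LinearMap.ext_ring ?_
  simp [dualId, Matrix.trace_mul_single]

lemma dualId_eq_iff {Φ : MatMap dH dK} {A : Matrix dH dH ℂ} :
    dualId Φ = A ↔ ∀ ρ, (Φ ρ).trace = (A * ρ).trace := by
  simp only [Matrix.ext_iff_trace_mul_right, trace_dualId_mul]

lemma dualId_conjMap (K : Matrix dK dH ℂ) : dualId (conjMap K) = Kᴴ * K :=
  dualId_eq_iff.mpr (trace_conjMap K)

lemma sum_dualId_eq_iff [Fintype Λ] {Φ : Λ → MatMap dH dK} {A : Matrix dH dH ℂ} :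
    ∑ y, dualId (Φ y) = A ↔ ∀ ρ, ∑ y, (Φ y ρ).trace = (A * ρ).trace := by
  simp only [Matrix.ext_iff_trace_mul_right, Finset.sum_mul, Matrix.trace_sum, trace_dualId_mul]

end Effect

section InstrumentLemmas

variable {dM : Type} [Fintype Λ] [Fintype dH] [DecidableEq dH] [Fintype dK]

lemma Instrument.sum_trace_op (I : Instrument Λ dH dK) (ρ : Matrix dH dH ℂ) :
    ∑ y, (I.op y ρ).trace = ρ.trace := by
  rw [← I.tp ρ, LinearMap.sum_apply, Matrix.trace_sum]

/-- The instrument with given completely positive operations whose traces add up to that of the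
input; the operations are then automatically trace-nonincreasing. -/
def Instrument.ofIsCP (op : Λ → MatMap dH dK) (hop : ∀ y, IsCP (op y))
    (htrace : ∀ ρ, ∑ y, (op y ρ).trace = ρ.trace) : Instrument Λ dH dK where
  op := op
  cp := hop
  tni y ρ hρ := by
    rw [← htrace ρ]
    exact Finset.single_le_sum (f := fun y ↦ (op y ρ).trace)
      (fun y _ ↦ ((hop y).map_posSemidef hρ).trace_nonneg) (Finset.mem_univ y)
  tp ρ := by rw [LinearMap.sum_apply, Matrix.trace_sum, htrace]

variable [Fintype dM] [DecidableEq dM]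

theorem exists_instrument_op_comp_conjMap_eq (N : Instrument Λ dM dK) (S : Matrix dM dH ℂ)
    {Φ : Λ → MatMap dH dK} (hΦ : ∀ y, IsCP (Φ y))
    (htrace : ∀ ρ, ∑ y, (Φ y ρ).trace = (conjMap S ρ).trace) :
    ∃ R : Instrument Λ dM dK, ∀ y, (R.op y) ∘ₗ conjMap S = Φ y := by
  obtain ⟨T, hSTS, hST⟩ := exists_mul_mul_eq_self_isHermitian_mul S
  have hproj : IsStarProjection (S * T) := ⟨by rw [IsIdempotentElem, ← Matrix.mul_assoc, hSTS], hST⟩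
  have hΦTS (y : Λ) : Φ y ∘ₗ conjMap (T * S) = Φ y := by
    rw [← sub_sub_cancel 1 (T * S)]
    refine (hΦ y).comp_conjMap_one_sub_of_trace_eq_zero ?_
    have hker : S * (1 - T * S) = 0 := by
      rw [Matrix.mul_sub, Matrix.mul_one, ← Matrix.mul_assoc, hSTS, sub_self]
    refine (Finset.sum_eq_zero_iff_of_nonneg fun y _ ↦ ((hΦ y).map_posSemidef
      (posSemidef_self_mul_conjTranspose _)).trace_nonneg).mp ?_ y (Finset.mem_univ y)
    rw [htrace, conjMap_apply, ← Matrix.mul_assoc, hker, Matrix.zero_mul, Matrix.zero_mul,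
      Matrix.trace_zero]
  refine ⟨.ofIsCP (fun y ↦ Φ y ∘ₗ conjMap T + N.op y ∘ₗ conjMap (1 - S * T))
    (fun y ↦ ((hΦ y).comp (isCP_conjMap T)).add ((N.cp y).comp (isCP_conjMap _)))
    fun ρ ↦ ?_, fun y ↦ ?_⟩
  · simp only [LinearMap.add_apply, LinearMap.comp_apply, Matrix.trace_add, Finset.sum_add_distrib,
      htrace, N.sum_trace_op]
    rw [← LinearMap.comp_apply, conjMap_comp_conjMap, trace_conjMap_add_trace_conjMap_one_sub hproj]
  · have hcompl : (1 - S * T) * S = 0 := by rw [Matrix.sub_mul, Matrix.one_mul, hSTS, sub_self]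
    change (Φ y ∘ₗ conjMap T + N.op y ∘ₗ conjMap (1 - S * T)) ∘ₗ conjMap S = Φ y
    rw [LinearMap.add_comp, LinearMap.comp_assoc, LinearMap.comp_assoc, conjMap_comp_conjMap,
      conjMap_comp_conjMap, hcompl, conjMap_zero, LinearMap.comp_zero, add_zero, hΦTS]

end InstrumentLemmas

section Compatibility

variable {dM : Type} [Fintype Ω] [Fintype Λ] [Fintype dH] [DecidableEq dH] [Fintype dK]
  [Fintype dM] [DecidableEq dM] {A : POVM Ω dH} {J : Instrument Λ dH dK} {L : Instrument Ω dH dM}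

lemma POVMInsCompatible.of_postprocessed (hA : ∀ x, dualId (L.op x) = A.elem x)
    (hJ : Postprocessed J L) : POVMInsCompatible A J := by
  obtain ⟨R, hR⟩ := hJ
  have hsum (x : Ω) (ρ : Matrix dH dH ℂ) :
      ∑ y, (((R x).op y ∘ₗ L.op x) ρ).trace = (L.op x ρ).trace :=
    (R x).sum_trace_op (L.op x ρ)
  refine ⟨.ofIsCP (fun p ↦ (R p.1).op p.2 ∘ₗ L.op p.1)
    (fun p ↦ ((R p.1).cp p.2).comp (L.cp p.1)) fun ρ ↦ ?_, fun y ↦ (hR y).symm, fun x ↦ ?_⟩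
  · simp only [Fintype.sum_prod_type, hsum, L.sum_trace_op]
  · exact sum_dualId_eq_iff.mpr fun ρ ↦ (hsum x ρ).trans (dualId_eq_iff.mp (hA x) ρ)

lemma POVMInsCompatible.postprocessed (hN : Nonempty (Instrument Λ dM dK))
    (hA : ∀ x, dualId (L.op x) = A.elem x) (hL : ∀ x, ∃ K, L.op x = conjMap K)
    (hAJ : POVMInsCompatible A J) : Postprocessed J L := by
  obtain ⟨N⟩ := hN
  obtain ⟨G, hGJ, hGA⟩ := hAJ
  choose K hK using hL
  have hfactor (x : Ω) : ∃ R : Instrument Λ dM dK, ∀ y, R.op y ∘ₗ conjMap (K x) = G.op (x, y) := by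
    refine exists_instrument_op_comp_conjMap_eq N (K x) (fun y ↦ G.cp (x, y)) fun ρ ↦ ?_
    rw [← hK, sum_dualId_eq_iff.mp (hGA x), dualId_eq_iff.mp (hA x)]
  choose R hR using hfactor
  exact ⟨R, fun y ↦ by simp only [hK, hR, hGJ]⟩

theorem povm_instrument_compatible_iff_postprocessing_of_luders_general
    (hN : Nonempty (Instrument Λ dM dK)) (hA : ∀ x, dualId (L.op x) = A.elem x)
    (hL : ∀ x, ∃ K, L.op x = conjMap K) : POVMInsCompatible A J ↔ Postprocessed J L :=
  ⟨POVMInsCompatible.postprocessed hN hA hL, .of_postprocessed hA⟩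

end Compatibility

/-- A POVM `A` and an instrument `J` are compatible if and only if `J` is a
postprocessing of the Lüders instrument of `A`. -/
theorem povm_instrument_compatible_iff_postprocessing_of_luders
    [Fintype Ω] [Fintype Λ] [Fintype dH] [DecidableEq dH] [Fintype dK] [DecidableEq dK]
    (A : POVM Ω dH) (J : Instrument Λ dH dK)
    (L : Instrument Ω dH dH)
    (hL : ∀ x, ∀ ρ : Matrix dH dH ℂ, L.op x ρ = (A.pos x).sqrt * ρ * (A.pos x).sqrt) :
    POVMInsCompatible A J ↔ Postprocessed J L := by
  have hKraus (x : Ω) : L.op x = conjMap (A.pos x).sqrt := by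
    ext1 ρ
    rw [hL, conjMap_apply, isHermitian_posSemidef_sqrt]
  refine povm_instrument_compatible_iff_postprocessing_of_luders_general ⟨J⟩ (fun x ↦ ?_)
    fun x ↦ ⟨_, hKraus x⟩
  rw [hKraus, dualId_conjMap, isHermitian_posSemidef_sqrt, posSemidef_sqrt_mul_self]
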